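/- arXiv:2511.09505 — 5 statements merged into one kernel-verified Lean document; each statement's English description precedes it below -/
import Mathlib

section
/- Let v_1, ..., v_m be a frame in ℝ^n (a finite spanning family of vectors) that permits phase retrieval and is vital, i.e., the family permits phase retrieval but for every index j the family {v_i}_{i≠j} does not permit phase retrieval. Then m ≤ n(n+1)/2. -/
/-!
If a family of measurements is vital, then for each `j` there are two points on which all
measurements but the `j`-th agree. Evaluating a linear relation at both points and subtracting
isolates the coefficient of the `j`-th measurement, so the family is linearly independent. The
squares `x ↦ ⟨v i, x⟩ ^ 2` are quadratic forms, and these make up a space of dimension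
`n * (n + 1) / 2`.
-/

open Matrix

theorem linearIndependent_of_exists_eq_off_and_ne {ι X R N : Type*} [CommRing R] [IsDomain R]
    [AddCommGroup N] [Module R N] [Module.IsTorsionFree R N] {f : ι → X → N}
    (hf : ∀ j, ∃ x y, (∀ i ≠ j, f i x = f i y) ∧ f j x ≠ f j y) : LinearIndependent R f := by
  rw [linearIndependent_iff']
  intro s g hg j hj
  obtain ⟨x, y, hxy, hne⟩ := hf j
  have hsum (z : X) : ∑ i ∈ s, g i • f i z = 0 := by
    simpa only [Finset.sum_apply, Pi.smul_apply, Pi.zero_apply] using congrFun hg z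
  have hcoeff : g j • (f j x - f j y) = 0 := calc
    g j • (f j x - f j y) = ∑ i ∈ s, g i • (f i x - f i y) := by
      rw [Finset.sum_eq_single_of_mem j hj]
      exact fun i _ hij ↦ by rw [hxy i hij, sub_self, smul_zero]
    _ = 0 := by simp only [smul_sub, Finset.sum_sub_distrib, hsum, sub_self]
  exact (smul_eq_zero.mp hcoeff).resolve_right (sub_ne_zero.mpr hne)

section PhaseRetrieval

variable {ι X N : Type*} [Neg X]

/-- A family of measurements `f i` permits phase retrieval if the values `f i x` determine `x` up
to sign. A family of vectors `v i` does so in the classical sense when `f i x = ⟨v i, x⟩ ^ 2`. -/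
def PermitsPhaseRetrieval (f : ι → X → N) : Prop :=
  ∀ x y : X, (∀ i, f i x = f i y) → x = y ∨ x = -y

/-- A family of measurements is vital if it permits phase retrieval, but no longer does so when any
one of its members is removed. -/
def IsVital (f : ι → X → N) : Prop :=
  PermitsPhaseRetrieval f ∧ ∀ j, ¬ PermitsPhaseRetrieval fun i : {i : ι // i ≠ j} ↦ f i

theorem IsVital.exists_eq_off_and_ne {f : ι → X → N} (hf : IsVital f) (j : ι) :
    ∃ x y, (∀ i ≠ j, f i x = f i y) ∧ f j x ≠ f j y := by
  obtain ⟨hPR, hvital⟩ := hf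
  have hj := hvital j
  simp only [PermitsPhaseRetrieval, Subtype.forall] at hj
  push Not at hj
  obtain ⟨x, y, hxy, hne, hne_neg⟩ := hj
  refine ⟨x, y, hxy, fun hjxy ↦ ?_⟩
  have hall : ∀ i, f i x = f i y := fun i ↦ by
    obtain rfl | hij := eq_or_ne i j
    exacts [hjxy, hxy i hij]
  exact (hPR x y hall).elim hne hne_neg

end PhaseRetrieval

section QuadraticMap

open Module QuadraticMap

variable {κ R M N : Type*} [CommRing R] [AddCommGroup M] [Module R M] [AddCommGroup N] [Module R N]

theorem quadraticMap_eq_of_span_eq_top {b : κ → M} (hb : Submodule.span R (Set.range b) = ⊤)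
    {Q Q' : QuadraticMap R M N} (hdiag : ∀ i, Q (b i) = Q' (b i))
    (hpolar : ∀ i j, i ≠ j → polar Q (b i) (b j) = polar Q' (b i) (b j)) : Q = Q' := by
  have hpolarSym2 : polarSym2 Q ∘ Sym2.map b = polarSym2 Q' ∘ Sym2.map b := by
    ext ⟨i, j⟩
    change polar Q (b i) (b j) = polar Q' (b i) (b j)
    obtain rfl | hij := eq_or_ne i j
    · rw [polar_self, polar_self, hdiag]
    · exact hpolar i j hij
  ext x
  obtain ⟨l, rfl⟩ : ∃ l, Finsupp.linearCombination R b l = x :=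
    LinearMap.range_eq_top.mp ((Finsupp.range_linearCombination R).trans hb) x
  rw [apply_linearCombination', apply_linearCombination', hpolarSym2,
    show Q ∘ b = Q' ∘ b from funext hdiag]

theorem exists_quadraticMap_apply_basis (b : Basis κ R M) (d : κ → N) (c : Sym2 κ → N) :
    ∃ Q : QuadraticMap R M N,
      (∀ i, Q (b i) = d i) ∧ ∀ i j, i ≠ j → polar Q (b i) (b j) = c s(i, j) := by
  let : LinearOrder κ := IsWellOrder.linearOrder WellOrderingRel
  -- The Gram matrix of `B` is upper triangular: a symmetric one would require halving `c`.
  let B : LinearMap.BilinMap R M N := b.constr R fun i ↦ b.constr R fun j ↦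
    if i = j then d i else if i < j then c s(i, j) else 0
  have hB (i j : κ) : B (b i) (b j) = if i = j then d i else if i < j then c s(i, j) else 0 := by
    simp only [B, Basis.constr_basis]
  refine ⟨B.toQuadraticMap, fun i ↦ ?_, fun i j hij ↦ ?_⟩
  · rw [LinearMap.BilinMap.toQuadraticMap_apply, hB, if_pos rfl]
  · rw [LinearMap.BilinMap.polar_toQuadraticMap, hB, hB, if_neg hij, if_neg hij.symm]
    obtain hlt | hgt := hij.lt_or_gt
    · rw [if_pos hlt, if_neg hlt.not_gt, add_zero]
    · rw [if_neg hgt.not_gt, if_pos hgt, zero_add, Sym2.eq_swap]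

/-- The coordinates of a quadratic map with respect to a family `b` of vectors: its values on `b`
and its polar form on the unordered pairs of distinct indices. The polar form is twice the value on
the diagonal, so keeping the two apart gives coordinates in characteristic two as well. -/
def quadraticMapCoords (b : κ → M) :
    QuadraticMap R M N →ₗ[R] (κ → N) × ({p : Sym2 κ // ¬ p.IsDiag} → N) where
  toFun Q := (fun i ↦ Q (b i), fun p ↦ polarSym2 Q (p.1.map b))
  map_add' Q Q' := by
    refine Prod.ext rfl (funext ?_)
    rintro ⟨⟨i, j⟩, _⟩
    exact polar_add Q Q' (b i) (b j)
  map_smul' r Q := by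
    refine Prod.ext rfl (funext ?_)
    rintro ⟨⟨i, j⟩, _⟩
    exact polar_smul Q r (b i) (b j)

theorem bijective_quadraticMapCoords (b : Basis κ R M) :
    Function.Bijective (quadraticMapCoords (R := R) (N := N) b) := by
  classical
  refine ⟨fun Q Q' h ↦ ?_, fun ⟨d, c⟩ ↦ ?_⟩
  · obtain ⟨hdiag, hpolar⟩ := Prod.ext_iff.mp h
    exact quadraticMap_eq_of_span_eq_top b.span_eq (congrFun hdiag)
      fun i j hij ↦ congrFun hpolar ⟨s(i, j), hij⟩
  · obtain ⟨Q, hdiag, hpolar⟩ := exists_quadraticMap_apply_basis b d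
      fun p ↦ if hp : p.IsDiag then 0 else c ⟨p, hp⟩
    refine ⟨Q, Prod.ext (funext hdiag) (funext ?_)⟩
    rintro ⟨⟨i, j⟩, hij⟩
    exact (hpolar i j hij).trans (dif_neg hij)

/-- The space of quadratic maps on a module with basis `b`, in coordinates. -/
noncomputable def quadraticMapEquivOfBasis (b : Basis κ R M) :
    QuadraticMap R M N ≃ₗ[R] (κ → N) × ({p : Sym2 κ // ¬ p.IsDiag} → N) :=
  .ofBijective (quadraticMapCoords b) (bijective_quadraticMapCoords b)

instance quadraticMap_finite [Module.Free R M] [Module.Finite R M] [Module.Finite R N] :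
    Module.Finite R (QuadraticMap R M N) :=
  .equiv (quadraticMapEquivOfBasis (Free.chooseBasis R M)).symm

theorem finrank_quadraticForm [Nontrivial R] [Module.Free R M] [Module.Finite R M] :
    finrank R (QuadraticForm R M) = finrank R M * (finrank R M + 1) / 2 := by
  classical
  rw [(quadraticMapEquivOfBasis (Free.chooseBasis R M)).finrank_eq, finrank_prod,
    finrank_fintype_fun_eq_card, finrank_fintype_fun_eq_card, Sym2.card_subtype_not_diag,
    finrank_eq_card_chooseBasisIndex, Nat.choose_two_right, add_comm,
    ← Nat.triangle_succ, Nat.add_sub_cancel, mul_comm]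

end QuadraticMap

/-- The phaseless measurement `x ↦ ⟨v, x⟩ ^ 2` by a vector `v`, as a quadratic form. -/
def dotProductSq {κ R : Type*} [Fintype κ] [CommRing R] (v : κ → R) : QuadraticForm R (κ → R) :=
  QuadraticMap.sq.comp (dotProductBilin R R v)

theorem dotProductSq_apply {κ R : Type*} [Fintype κ] [CommRing R] (v x : κ → R) :
    dotProductSq v x = (v ⬝ᵥ x) ^ 2 :=
  (sq _).symm

open Cardinal in
theorem stmt4_general {ι R M : Type*} [CommRing R] [IsDomain R] [AddCommGroup M] [Module R M]
    [Module.Free R M] [Module.Finite R M] (Q : ι → QuadraticForm R M)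
    (hQ : IsVital fun i ↦ ⇑(Q i)) :
    #ι ≤ (Module.finrank R M * (Module.finrank R M + 1) / 2 : ℕ) := by
  let coe : QuadraticForm R M →ₗ[R] M → R := ⟨⟨(⇑), FunLike.coe_add⟩, FunLike.coe_smul⟩
  have hli : LinearIndependent R Q :=
    .of_comp coe (linearIndependent_of_exists_eq_off_and_ne hQ.exists_eq_off_and_ne)
  rw [← finrank_quadraticForm]
  exact hli.cardinalMk_le_finrank

theorem stmt4 {m n : ℕ} (v : Fin m → Fin n → ℝ)
    (hspan : Submodule.span ℝ (Set.range v) = ⊤)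
    (hPR : ∀ x y : Fin n → ℝ,
      (∀ i, (v i ⬝ᵥ x) ^ 2 = (v i ⬝ᵥ y) ^ 2) → x = y ∨ x = -y)
    (hvital : ∀ j : Fin m, ¬ ∀ x y : Fin n → ℝ,
      (∀ i, i ≠ j → (v i ⬝ᵥ x) ^ 2 = (v i ⬝ᵥ y) ^ 2) → x = y ∨ x = -y) :
    m ≤ n * (n + 1) / 2 := by
  have hv : IsVital fun i ↦ ⇑(dotProductSq (v i)) := by
    simpa only [IsVital, PermitsPhaseRetrieval, dotProductSq_apply, Subtype.forall]
      using And.intro hPR hvital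
  simpa using stmt4_general _ hv
end

section
/- Let B_1, ..., B_b ⊆ {1, ..., n} be a collection of blocks whose bipartite incidence graph G (between points {1, ..., n} and blocks) satisfies: for any two disjoint nonempty subsets S, T ⊆ {1, ..., n} of points, the number of blocks meeting both S and T is at least |S| + |T| - 1 (i.e., |N(S) ∩ N(T)| ≥ |S| + |T| - 1). Then there exist vectors v_1, ..., v_b ∈ ℝ^n with supp(v_i) ⊆ B_i for each i such that the frame {e_1, ..., e_n} ∪ {v_1, ..., v_b} satisfies the Complement Property. -/
open Matrix

/-- An indexed family of vectors in `ℝ^n` satisfies the Complement Property if for every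
partition of the index set into two parts, the vectors of at least one part span `ℝ^n`. -/
def ComplementPropertyFam {ι : Type*} {n : ℕ} (u : ι → Fin n → ℝ) : Prop :=
  ∀ I : Set ι, Submodule.span ℝ (u '' I) = ⊤ ∨ Submodule.span ℝ (u '' Iᶜ) = ⊤

/-!
Choose the nonzero entries of the `v i` generically. The supports of the frame are then the
singletons together with the blocks, and a set of frame vectors spans as soon as its supports
admit a system of distinct representatives indexed by the points: the corresponding square
submatrix has nonzero determinant, since that determinant is a nonzero polynomial in the free
entries (it specializes to `det 1`). If neither part of a partition had such a system, Hall's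
theorem would give deficient sets `S` and `T`, one for each part. After removing the points whose
unit vector lies in the respective part, `S` and `T` are disjoint. Every block meeting both is
counted on one of the two sides, so there are at most `(|S| - 1) + (|T| - 1)` of them, against the
expansion hypothesis.
-/

section

open Finset MvPolynomial

variable {α ι κ R R' K : Type*} [DecidableEq α]

/-- The indices in `J` of the blocks that meet `S`. The neighbourhood `N(S)` in the incidence graph
is the case `J = univ`; smaller `J` serve to count the blocks on one side of a partition. -/
def blocksMeeting (B : κ → Finset α) (J : Finset κ) (S : Finset α) : Finset κ :=
  {i ∈ J | (S ∩ B i).Nonempty}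

/-- A matching that saturates the points of a family of blocks: distinct points `a` are assigned
the indices `f a` of distinct blocks, each containing its point. -/
structure IsPointMatching (B : κ → Finset α) (f : α → κ) : Prop where
  injective : Function.Injective f
  mem (a : α) : a ∈ B (f a)

/-- The supports of the frame consisting of the unit vectors and of vectors supported on the
blocks: a singleton for each point (index `Sum.inl`) and the given blocks (index `Sum.inr`). -/
def withSingletons (B : ι → Finset α) : α ⊕ ι → Finset α :=
  Sum.elim singleton B

/-- The matrix obtained from `A` by replacing with zero the entries `A i a` for which `a` is not
in the block `B i`. It serves to produce matrices whose rows have the prescribed supports. -/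
def restrictToBlocks [Zero R] (B : ι → Finset α) (A : Matrix ι α R) : Matrix ι α R :=
  of fun i a => if a ∈ B i then A i a else 0

theorem mem_blocksMeeting {B : κ → Finset α} {J : Finset κ} {S : Finset α} {i : κ} :
    i ∈ blocksMeeting B J S ↔ i ∈ J ∧ ∃ a ∈ S, a ∈ B i := by
  simp only [blocksMeeting, mem_filter, Finset.Nonempty, mem_inter]

theorem exists_isPointMatching_of_card_le {B : κ → Finset α} {J : Finset κ}
    (hJ : ∀ S : Finset α, #S ≤ #(blocksMeeting B J S)) :
    ∃ f, IsPointMatching B f ∧ ∀ a, f a ∈ J := by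
  classical
  have hall (S : Finset α) : #S ≤ #(S.biUnion fun a => {i ∈ J | a ∈ B i}) := by
    refine (hJ S).trans (card_le_card fun i hi => ?_)
    obtain ⟨hiJ, a, haS, hai⟩ := mem_blocksMeeting.1 hi
    exact mem_biUnion.2 ⟨a, haS, mem_filter.2 ⟨hiJ, hai⟩⟩
  obtain ⟨f, hf, hmem⟩ := (all_card_le_biUnion_card_iff_exists_injective _).1 hall
  exact ⟨f, ⟨hf, fun a => (mem_filter.1 (hmem a)).2⟩, fun a => (mem_filter.1 (hmem a)).1⟩

theorem card_add_card_le_card_blocksMeeting_withSingletons (B : ι → Finset α)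
    (J : Finset (α ⊕ ι)) (S : Finset α) :
    #(S ∩ J.toLeft) + #(blocksMeeting B J.toRight (S \ J.toLeft)) ≤
      #(blocksMeeting (withSingletons B) J S) := by
  rw [← card_disjSum]
  refine card_le_card (disjSum_subset.2 ⟨fun a ha => ?_, fun i hi => ?_⟩)
  · obtain ⟨haS, haJ⟩ := mem_inter.1 ha
    exact mem_toLeft.2 (mem_blocksMeeting.2 ⟨mem_toLeft.1 haJ, a, haS, mem_singleton_self a⟩)
  · obtain ⟨hiJ, a, ha, hai⟩ := mem_blocksMeeting.1 hi
    exact mem_toRight.2 (mem_blocksMeeting.2 ⟨mem_toRight.1 hiJ, a, (mem_sdiff.1 ha).1, hai⟩)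

theorem exists_isPointMatching_withSingletons {B : ι → Finset α} {J : Finset (α ⊕ ι)}
    (hJ : ∀ S : Finset α, Disjoint S J.toLeft → #S ≤ #(blocksMeeting B J.toRight S)) :
    ∃ f, IsPointMatching (withSingletons B) f ∧ ∀ a, f a ∈ J := by
  refine exists_isPointMatching_of_card_le fun S => ?_
  calc #S = #(S ∩ J.toLeft) + #(S \ J.toLeft) := (card_inter_add_card_sdiff S J.toLeft).symm
    _ ≤ #(S ∩ J.toLeft) + #(blocksMeeting B J.toRight (S \ J.toLeft)) := by
      gcongr
      exact hJ _ sdiff_disjoint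
    _ ≤ _ := card_add_card_le_card_blocksMeeting_withSingletons B J S

theorem card_inter_blocksMeeting_univ_le [Fintype κ] [DecidableEq κ] (B : κ → Finset α)
    (J : Finset κ) (S T : Finset α) :
    #(blocksMeeting B univ S ∩ blocksMeeting B univ T) ≤
      #(blocksMeeting B J S) + #(blocksMeeting B Jᶜ T) := by
  refine (card_le_card fun i hi => ?_).trans (card_union_le _ _)
  simp only [mem_union, mem_inter, mem_blocksMeeting, mem_univ, mem_compl, true_and] at hi ⊢
  exact (em (i ∈ J)).imp (⟨·, hi.1⟩) (⟨·, hi.2⟩)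

theorem exists_isPointMatching_or_compl [Fintype α] [Fintype ι] [DecidableEq ι]
    {B : ι → Finset α}
    (hB : ∀ S T : Finset α, S.Nonempty → T.Nonempty → Disjoint S T →
      #S + #T ≤ #(blocksMeeting B univ S ∩ blocksMeeting B univ T) + 1)
    (J : Finset (α ⊕ ι)) :
    (∃ f, IsPointMatching (withSingletons B) f ∧ ∀ a, f a ∈ J) ∨
      ∃ f, IsPointMatching (withSingletons B) f ∧ ∀ a, f a ∈ Jᶜ := by
  by_contra! ⟨hJ, hJc⟩
  obtain ⟨S, hSJ, hS⟩ : ∃ S, Disjoint S J.toLeft ∧ #(blocksMeeting B J.toRight S) < #S := by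
    contrapose! hJ
    exact exists_isPointMatching_withSingletons hJ
  obtain ⟨T, hTJ, hT⟩ : ∃ T, Disjoint T Jᶜ.toLeft ∧ #(blocksMeeting B Jᶜ.toRight T) < #T := by
    contrapose! hJc
    exact exists_isPointMatching_withSingletons hJc
  have hST : Disjoint S T := disjoint_left.2 fun a haS haT =>
    disjoint_left.1 hTJ haT (by simpa using disjoint_left.1 hSJ haS)
  have expansion := hB S T (card_pos.1 (by lia)) (card_pos.1 (by lia)) hST
  have split := card_inter_blocksMeeting_univ_le B J.toRight S T
  have toRight_compl : Jᶜ.toRight = J.toRightᶜ := by ext i; simp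
  rw [toRight_compl] at hT
  lia

theorem restrictToBlocks_map [Zero R] [Zero R'] (B : ι → Finset α) (A : Matrix ι α R)
    {g : R → R'} (hg : g 0 = 0) : (restrictToBlocks B A).map g = restrictToBlocks B (A.map g) := by
  ext i a
  simp only [restrictToBlocks, map_apply, of_apply, apply_ite g, hg]

theorem mem_of_restrictToBlocks_ne_zero [Zero R] {B : ι → Finset α} {A : Matrix ι α R} {i : ι}
    {a : α} (h : restrictToBlocks B A i a ≠ 0) : a ∈ B i := by
  by_contra ha
  exact h (if_neg ha)

theorem IsPointMatching.exists_submatrix_eq_one [Zero R] [One R] {B : ι → Finset α}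
    {f : α → α ⊕ ι} (hf : IsPointMatching (withSingletons B) f) :
    ∃ A : Matrix ι α R, (fromRows 1 (restrictToBlocks B A)).submatrix f id = 1 := by
  classical
  refine ⟨of fun i a => if f a = Sum.inr i then 1 else 0, ?_⟩
  ext a c
  have ha := hf.mem a
  rw [submatrix_apply, id]
  cases hfa : f a with
  | inl k =>
    obtain rfl : a = k := by simpa [hfa, withSingletons] using ha
    rw [fromRows_apply_inl]
  | inr i =>
    have hai : a ∈ B i := by simpa [hfa, withSingletons] using ha
    rw [fromRows_apply_inr, one_apply]
    obtain rfl | hac := eq_or_ne a c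
    · simp [restrictToBlocks, hai, hfa]
    · have hfc : f c ≠ Sum.inr i := fun h => hac (hf.injective (hfa.trans h.symm))
      simp [restrictToBlocks, hac, hfc]

theorem eval_det_submatrix_restrictToBlocks_mvPolynomialX [Fintype α] [CommRing R]
    (B : ι → Finset α) (f : α → α ⊕ ι) (A : Matrix ι α R) :
    eval (fun p => A p.1 p.2)
        ((fromRows 1 (restrictToBlocks B (mvPolynomialX ι α R))).submatrix f id).det =
      ((fromRows 1 (restrictToBlocks B A)).submatrix f id).det := by
  have eval_X : (mvPolynomialX ι α R).map (eval fun p => A p.1 p.2) = A :=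
    mvPolynomialX_map_eval₂ _ A
  rw [RingHom.map_det, RingHom.mapMatrix_apply, ← submatrix_map, fromRows_map,
    Matrix.map_one _ (map_zero _) (map_one _), restrictToBlocks_map B _ (map_zero _), eval_X]

theorem IsPointMatching.det_submatrix_mvPolynomialX_ne_zero [Fintype α] [CommRing R] [Nontrivial R]
    {B : ι → Finset α} {f : α → α ⊕ ι} (hf : IsPointMatching (withSingletons B) f) :
    ((fromRows 1 (restrictToBlocks B (mvPolynomialX ι α R))).submatrix f id).det ≠ 0 := by
  intro hdet
  obtain ⟨A, hA⟩ := hf.exists_submatrix_eq_one (R := R)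
  have heval := eval_det_submatrix_restrictToBlocks_mvPolynomialX B f A
  rw [hdet, map_zero, hA, det_one] at heval
  exact zero_ne_one heval

theorem exists_forall_eval_ne_zero {σ : Type*} [Finite κ] [CommRing R] [IsDomain R] [Infinite R]
    {p : κ → MvPolynomial σ R} (hp : ∀ i, p i ≠ 0) : ∃ x : σ → R, ∀ i, eval x (p i) ≠ 0 := by
  cases nonempty_fintype κ
  have hprod : ∏ i, p i ≠ 0 := prod_ne_zero_iff.2 fun i _ => hp i
  contrapose! hprod
  refine MvPolynomial.funext fun x => ?_
  obtain ⟨i, hi⟩ := hprod x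
  rw [map_prod, map_zero]
  exact prod_eq_zero (mem_univ i) hi

theorem exists_forall_isPointMatching_det_ne_zero [Fintype α] [Finite ι] [CommRing R] [IsDomain R]
    [Infinite R] (B : ι → Finset α) :
    ∃ A : Matrix ι α R, ∀ f, IsPointMatching (withSingletons B) f →
      ((fromRows 1 (restrictToBlocks B A)).submatrix f id).det ≠ 0 := by
  obtain ⟨x, hx⟩ := exists_forall_eval_ne_zero
    fun f : {f // IsPointMatching (withSingletons B) f} =>
      f.2.det_submatrix_mvPolynomialX_ne_zero (R := R)
  refine ⟨of fun i a => x (i, a), fun f hf => ?_⟩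
  rw [← eval_det_submatrix_restrictToBlocks_mvPolynomialX]
  exact hx ⟨f, hf⟩

theorem span_row_image_eq_top_of_det_submatrix_ne_zero [Fintype α] [Field K] {A : Matrix κ α K}
    {f : α → κ} (hdet : (A.submatrix f id).det ≠ 0) {I : Set κ} (hf : ∀ a, f a ∈ I) :
    Submodule.span K (A.row '' I) = ⊤ := by
  have hli : LinearIndependent K (A.submatrix f id).row :=
    linearIndependent_rows_of_det_ne_zero hdet
  have hspan := hli.span_eq_top_of_card_eq_finrank' (Module.finrank_fintype_fun_eq_card K).symm
  rw [eq_top_iff, ← hspan]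
  exact Submodule.span_mono (Set.range_subset_iff.2 fun a => ⟨f a, hf a, rfl⟩)

theorem row_fromRows_one [Zero R] [One R] (A : Matrix ι α R) :
    (fromRows 1 A).row = Sum.elim (fun k => Pi.single k 1) A := by
  ext (k | i) a
  · exact one_eq_pi_single
  · rfl

theorem stmt12_general [Finite α] [Fintype ι] [DecidableEq ι] [Field K] [Infinite K]
    (B : ι → Finset α)
    (hB : ∀ S T : Finset α, S.Nonempty → T.Nonempty → Disjoint S T →
      #S + #T ≤ #(blocksMeeting B univ S ∩ blocksMeeting B univ T) + 1) :
    ∃ v : ι → α → K, (∀ i a, v i a ≠ 0 → a ∈ B i) ∧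
      ∀ I : Set (α ⊕ ι),
        Submodule.span K (Sum.elim (fun k => (Pi.single k 1 : α → K)) v '' I) = ⊤ ∨
          Submodule.span K (Sum.elim (fun k => (Pi.single k 1 : α → K)) v '' Iᶜ) = ⊤ := by
  classical
  cases nonempty_fintype α
  obtain ⟨A, hA⟩ := exists_forall_isPointMatching_det_ne_zero (R := K) B
  refine ⟨restrictToBlocks B A, fun i a => mem_of_restrictToBlocks_ne_zero, fun I => ?_⟩
  rw [← row_fromRows_one]
  obtain ⟨f, hf, hfI⟩ | ⟨f, hf, hfI⟩ := exists_isPointMatching_or_compl hB I.toFinset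
  · exact .inl (span_row_image_eq_top_of_det_submatrix_ne_zero (hA f hf) (by simpa using hfI))
  · exact .inr (span_row_image_eq_top_of_det_submatrix_ne_zero (hA f hf) (by simpa using hfI))

end

theorem stmt12 (n b : ℕ) (B : Fin b → Finset (Fin n))
    (hexp : ∀ S T : Finset (Fin n), S.Nonempty → T.Nonempty → Disjoint S T →
      S.card + T.card - 1 ≤
        (Finset.univ.filter (fun i => (S ∩ B i).Nonempty ∧ (T ∩ B i).Nonempty)).card) :
    ∃ v : Fin b → Fin n → ℝ,
      (∀ i, ∀ j : Fin n, v i j ≠ 0 → j ∈ B i) ∧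
      ComplementPropertyFam
        (Sum.elim (fun k : Fin n => (Pi.single k 1 : Fin n → ℝ)) v) :=
  stmt12_general B fun S T hS hT hST => by
    simpa only [blocksMeeting, ← Finset.filter_and, tsub_le_iff_right] using hexp S T hS hT hST
end

section
/- Let n ≥ 2 and w ≥ 2, and let B_1, ..., B_b ⊆ {1, ..., n} be the blocks of an (n, w, w-1) block design: each |B_i| = w, and every pair of distinct points of {1, ..., n} lies in exactly w-1 blocks. Then for any two nonempty disjoint subsets S, T ⊆ {1, ..., n}, the number of blocks B_i with B_i ∩ S ≠ ∅ and B_i ∩ T ≠ ∅ is at least |S| + |T| - 1. -/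
/-! For a block `A` meeting both `S` and `T`, write `a = #(A ∩ S)`, `c = #(A ∩ T)`, `s = #S`,
`t = #T`. Since `1 ≤ a ≤ s` and `1 ≤ c ≤ t`, we have
`(1 - 1/a) (1 - 1/c) ≤ (1 - 1/s) (1 - 1/t)`, which says that
`a c (s + t - 1) ≤ s t (a + c - 1)`, and `a + c ≤ #A` by disjointness. The sum of `a c` over all
blocks counts the triples `(p, q, A)` with `p ∈ A ∩ S` and `q ∈ A ∩ T`, so it is at least `l s t`
if every pair in `S × T` lies in at least `l` blocks. Hence `l (s + t - 1)` is at most the sum of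
`#A - 1` over the blocks meeting both `S` and `T`. -/

open Finset

theorem mul_mul_add_sub_one_le {R : Type*} [CommRing R] [PartialOrder R]
    [IsOrderedRing R] {a c s t : R} (ha : 1 ≤ a) (hc : 1 ≤ c) (has : a ≤ s) (hct : c ≤ t) :
    a * c * (s + t - 1) ≤ s * t * (a + c - 1) := by
  have ha₀ : 0 ≤ a := zero_le_one.trans ha
  have ht₀ : 0 ≤ t := zero_le_one.trans (hc.trans hct)
  have hs : s * (a - 1) ≤ a * (s - 1) := by linear_combination has
  have ht : t * (c - 1) ≤ c * (t - 1) := by linear_combination hct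
  have h : s * (a - 1) * (t * (c - 1)) ≤ a * (s - 1) * (c * (t - 1)) :=
    mul_le_mul hs ht (mul_nonneg ht₀ (sub_nonneg.2 hc))
      (mul_nonneg ha₀ (sub_nonneg.2 (ha.trans has)))
  linear_combination h

section Blocks

variable {α ι : Type*} [DecidableEq α] {S T : Finset α}

theorem card_inter_mul_card_inter_mul_le {A : Finset α} (hST : Disjoint S T)
    (hS : (A ∩ S).Nonempty) (hT : (A ∩ T).Nonempty) :
    #(A ∩ S) * #(A ∩ T) * (#S + #T - 1) ≤ #S * #T * (#A - 1) := by
  have hSle : #(A ∩ S) ≤ #S := card_le_card inter_subset_right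
  have hTle : #(A ∩ T) ≤ #T := card_le_card inter_subset_right
  have hA : #(A ∩ S) + #(A ∩ T) ≤ #A := by
    rw [← card_union_of_disjoint (hST.mono inter_subset_right inter_subset_right)]
    exact card_le_card (union_subset inter_subset_left inter_subset_left)
  have hSpos := hS.card_pos
  have hTpos := hT.card_pos
  calc #(A ∩ S) * #(A ∩ T) * (#S + #T - 1)
      ≤ #S * #T * (#(A ∩ S) + #(A ∩ T) - 1) := by
        zify [show 1 ≤ #S + #T by lia, show 1 ≤ #(A ∩ S) + #(A ∩ T) by lia]
        apply mul_mul_add_sub_one_le <;> exact_mod_cast ‹_›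
    _ ≤ #S * #T * (#A - 1) := by gcongr

variable [Fintype ι]

theorem sum_card_inter_mul_card_inter (B : ι → Finset α) (S T : Finset α) :
    ∑ i, #(B i ∩ S) * #(B i ∩ T) = ∑ x ∈ S ×ˢ T, #{i | x.1 ∈ B i ∧ x.2 ∈ B i} := by
  refine Eq.trans (sum_congr rfl fun i _ => ?_) <|
    sum_card_bipartiteAbove_eq_sum_card_bipartiteBelow fun i (x : α × α) => x.1 ∈ B i ∧ x.2 ∈ B i
  rw [bipartiteAbove, filter_product (· ∈ B i) (· ∈ B i), card_product, filter_mem_eq_inter,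
    filter_mem_eq_inter, inter_comm S, inter_comm T]

theorem sum_filter_card_inter_mul_card_inter (B : ι → Finset α) (S T : Finset α) :
    ∑ i with (B i ∩ S).Nonempty ∧ (B i ∩ T).Nonempty, #(B i ∩ S) * #(B i ∩ T) =
      ∑ i, #(B i ∩ S) * #(B i ∩ T) :=
  sum_filter_of_ne fun _ _ h => by simpa only [mul_ne_zero_iff, card_ne_zero] using h

theorem stmt14_general {l : ℕ} (B : ι → Finset α) (hS : S.Nonempty) (hT : T.Nonempty)
    (hST : Disjoint S T) (hpair : ∀ p ∈ S, ∀ q ∈ T, l ≤ #{i | p ∈ B i ∧ q ∈ B i}) :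
    l * (#S + #T - 1) ≤
      ∑ i with (B i ∩ S).Nonempty ∧ (B i ∩ T).Nonempty, (#(B i) - 1) := by
  have hcount : #S * #T * l ≤ ∑ i, #(B i ∩ S) * #(B i ∩ T) := by
    rw [sum_card_inter_mul_card_inter, ← card_product, ← smul_eq_mul]
    refine card_nsmul_le_sum _ _ _ fun x hx => ?_
    exact hpair x.1 (mem_product.1 hx).1 x.2 (mem_product.1 hx).2
  refine Nat.le_of_mul_le_mul_left ?_ (Nat.mul_pos hS.card_pos hT.card_pos)
  calc #S * #T * (l * (#S + #T - 1))
      = #S * #T * l * (#S + #T - 1) := (mul_assoc _ _ _).symm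
    _ ≤ (∑ i, #(B i ∩ S) * #(B i ∩ T)) * (#S + #T - 1) := Nat.mul_le_mul_right _ hcount
    _ = ∑ i with (B i ∩ S).Nonempty ∧ (B i ∩ T).Nonempty,
          #(B i ∩ S) * #(B i ∩ T) * (#S + #T - 1) := by
        rw [← sum_filter_card_inter_mul_card_inter, sum_mul]
    _ ≤ ∑ i with (B i ∩ S).Nonempty ∧ (B i ∩ T).Nonempty, #S * #T * (#(B i) - 1) :=
        sum_le_sum fun i hi =>
          have ⟨hiS, hiT⟩ := (mem_filter.1 hi).2
          card_inter_mul_card_inter_mul_le hST hiS hiT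
    _ = #S * #T * ∑ i with (B i ∩ S).Nonempty ∧ (B i ∩ T).Nonempty, (#(B i) - 1) :=
        (mul_sum _ _ _).symm

end Blocks

theorem stmt14 (n w b : ℕ) (hn : 2 ≤ n) (hw : 2 ≤ w)
    (B : Fin b → Finset (Fin n))
    (hcard : ∀ i, (B i).card = w)
    (hpair : ∀ p q : Fin n, p ≠ q →
      (Finset.univ.filter (fun i => p ∈ B i ∧ q ∈ B i)).card = w - 1) :
    ∀ S T : Finset (Fin n), S.Nonempty → T.Nonempty → Disjoint S T →
      S.card + T.card - 1 ≤
        (Finset.univ.filter (fun i => (B i ∩ S).Nonempty ∧ (B i ∩ T).Nonempty)).card := by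
  intro S T hS hT hST
  have h := stmt14_general B hS hT hST fun p hp q hq =>
    (hpair p q (disjoint_iff_ne.1 hST p hp q hq)).ge
  simp only [hcard, sum_const, smul_eq_mul, mul_comm _ (w - 1)] at h
  exact Nat.le_of_mul_le_mul_left h (Nat.sub_pos_of_lt hw)
end

section
/- Let Σ_1, ..., Σ_n be subsets of {1, ..., n}. There exist vectors w_1, ..., w_n ∈ ℝ^n with supp(w_i) ⊆ Σ_i for each i that span ℝ^n if and only if the sets Σ_1, ..., Σ_n admit a system of distinct representatives, i.e., there exists a permutation σ of {1, ..., n} with σ(i) ∈ Σ_i for all i. -/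
/-!
The vectors `w i` span exactly when the determinant of the matrix with rows `w i` is a unit. A
nonzero determinant has a nonzero term in its Leibniz expansion, and the permutation of that term
is a system of distinct representatives for the supports of the rows. Conversely, a system of
distinct representatives `σ` picks out the standard basis vectors `e_{σ i}`.
-/

theorem exists_perm_forall_apply_ne_zero_of_det_ne_zero {ι R : Type*} [CommRing R]
    [Fintype ι] [DecidableEq ι] {A : Matrix ι ι R} (hA : A.det ≠ 0) :
    ∃ σ : Equiv.Perm ι, ∀ i, A i (σ i) ≠ 0 := by
  -- `Matrix.det_apply` lets permutations act on row indices; transposing moves them to columns.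
  rw [← Matrix.det_transpose, Matrix.det_apply] at hA
  obtain ⟨σ, -, hterm⟩ := Finset.exists_ne_zero_of_sum_ne_zero hA
  have hprod : ∏ i, A i (σ i) ≠ 0 := right_ne_zero_of_smul hterm
  exact ⟨σ, fun i hi => hprod (Finset.prod_eq_zero (Finset.mem_univ i) hi)⟩

theorem span_range_row_eq_top_iff_isUnit_det {ι R : Type*} [CommRing R] [Fintype ι]
    [DecidableEq ι] {A : Matrix ι ι R} :
    Submodule.span R (Set.range A.row) = ⊤ ↔ IsUnit A.det := by
  rw [← range_vecMulLinear, LinearMap.range_eq_top, ← Matrix.isUnit_iff_isUnit_det]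
  exact Matrix.vecMul_surjective_iff_isUnit

theorem span_range_single_comp_eq_top {ι κ R : Type*} [Semiring R] [Finite ι] [DecidableEq ι]
    {f : κ → ι} (hf : Function.Surjective f) :
    Submodule.span R (Set.range fun k => (Pi.single (f k) 1 : ι → R)) = ⊤ := by
  have hbasis := (Pi.basisFun R ι).span_eq
  rw [← hf.range_comp] at hbasis
  simpa only [Function.comp_def, Pi.basisFun_apply] using hbasis

theorem stmt16_general {ι : Type*} (R : Type*) [Finite ι] [CommRing R] [Nontrivial R]
    (S : ι → Set ι) :
    (∃ w : ι → ι → R, (∀ i, (w i).support ⊆ S i) ∧ Submodule.span R (Set.range w) = ⊤)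
      ↔ ∃ σ : Equiv.Perm ι, ∀ i, σ i ∈ S i := by
  classical
  cases nonempty_fintype ι
  constructor
  · rintro ⟨w, hsupp, hspan⟩
    have hdet : (Matrix.of w).det ≠ 0 := (span_range_row_eq_top_iff_isUnit_det.mp hspan).ne_zero
    obtain ⟨σ, hσ⟩ := exists_perm_forall_apply_ne_zero_of_det_ne_zero hdet
    exact ⟨σ, fun i => hsupp i (hσ i)⟩
  · rintro ⟨σ, hσ⟩
    refine ⟨fun i => Pi.single (σ i) 1, fun i => ?_, span_range_single_comp_eq_top σ.surjective⟩
    exact Pi.support_single_subset.trans (Set.singleton_subset_iff.mpr (hσ i))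

theorem stmt16 (n : ℕ) (Sig : Fin n → Finset (Fin n)) :
    (∃ w : Fin n → Fin n → ℝ,
        (∀ i, ∀ j : Fin n, w i j ≠ 0 → j ∈ Sig i) ∧
        Submodule.span ℝ (Set.range w) = ⊤)
      ↔ ∃ σ : Equiv.Perm (Fin n), ∀ i, σ i ∈ Sig i :=
  stmt16_general ℝ fun i => ↑(Sig i)
end

section
/- Fix n ≥ 1 and consider the 2n index symbols {E_1, ..., E_n, V_1, ..., V_n} with assigned support sets Σ(E_j) = {j} and Σ(V_i) = {1, ..., n} \ {i}. Let S be an n-element subset of these 2n symbols. Then the family of supports (Σ(s))_{s ∈ S} admits a system of distinct representatives (an injection f : S → {1, ..., n} with f(s) ∈ Σ(s) for each s ∈ S) if and only if S is not of the form S_i = {E_k : k ≠ i} ∪ {V_i} for some i ∈ {1, ..., n}. -/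
/-- Support sets of the `2n` symbols: `Σ(E j) = {j}` (symbol `Sum.inl j`) and
`Σ(V i) = {1, …, n} \ {i}` (symbol `Sum.inr i`). -/
def symbolSupport {n : ℕ} : Fin n ⊕ Fin n → Finset (Fin n) :=
  Sum.elim (fun j => {j}) (fun i => Finset.univ.erase i)

/-!
The set `S_i` is exactly the set of symbols whose support misses `i`. It has `n` members but covers
at most `n - 1` points, so it has no system of distinct representatives. Conversely, let `T` be a
set of at most `n` symbols. If the supports in `T` cover every point, Hall's inequality is clear.
Otherwise they miss some `i`, so `T ⊆ S_i`, and if `T ≠ S_i` then `T` has at most `n - 1` members;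
either it contains some `V_j`, whose support alone has `n - 1` points, or it consists of symbols
`E_k`, whose supports are disjoint singletons.
-/

open Finset

section Hall

variable {ι α : Type*} [DecidableEq α] [Nonempty (ι → α)]

theorem exists_injOn_forall_mem_iff_forall_subset_card_le (A : ι → Finset α) (S : Finset ι) :
    (∃ f : ι → α, Set.InjOn f S ∧ ∀ s ∈ S, f s ∈ A s) ↔ ∀ T ⊆ S, #T ≤ #(T.biUnion A) := by
  classical
  constructor
  · rintro ⟨f, hf, hfA⟩ T hTS
    exact card_le_card_of_injOn f (fun s hs => mem_biUnion.mpr ⟨s, hs, hfA s (hTS hs)⟩)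
      (hf.mono hTS)
  · intro hHall
    have hHall' : ∀ U : Finset S, #U ≤ #(U.biUnion fun s => A s) := fun U => by
      simpa only [card_image_of_injective U Subtype.val_injective, image_biUnion] using
        hHall (U.image Subtype.val) (image_subset_iff.mpr fun s _ => s.2)
    obtain ⟨g, hg, hgA⟩ := (all_card_le_biUnion_card_iff_exists_injective _).mp hHall'
    let f : ι → α := Function.extend Subtype.val g (Classical.arbitrary _)
    have hfg (s : S) : f s = g s := Subtype.val_injective.extend_apply g _ s
    refine ⟨f, fun s hs t ht hst => ?_, fun s hs => hfg ⟨s, hs⟩ ▸ hgA ⟨s, hs⟩⟩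
    have hgst : g ⟨s, hs⟩ = g ⟨t, ht⟩ := by rw [← hfg, ← hfg, hst]
    exact congrArg Subtype.val (hg hgst)

end Hall

section Design

variable {α : Type*} [Fintype α] [DecidableEq α]

/-- `symbolSupport` over an arbitrary finite set `α` of points: the supports of the unit vectors
`E j` (symbol `Sum.inl j`) and of the vectors `V i` (symbol `Sum.inr i`) carried by the blocks
`α \ {i}`. -/
def designSupport : α ⊕ α → Finset α :=
  Sum.elim (fun j => {j}) (fun i => univ.erase i)

/-- The exceptional set `S_i = {E_k : k ≠ i} ∪ {V_i}`, the only kind of obstruction to distinct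
representatives apart from having too many symbols. -/
def exceptionalSet (i : α) : Finset (α ⊕ α) :=
  insert (Sum.inr i) ((univ.erase i).image Sum.inl)

theorem mem_exceptionalSet {i : α} {s : α ⊕ α} :
    s ∈ exceptionalSet i ↔ i ∉ designSupport s := by
  cases s <;> simp [exceptionalSet, designSupport, eq_comm]

theorem card_exceptionalSet (i : α) : #(exceptionalSet i) = Fintype.card α := by
  rw [exceptionalSet, card_insert_of_notMem (by simp),
    card_image_of_injective _ Sum.inl_injective, card_erase_add_one (mem_univ i), card_univ]

theorem subset_exceptionalSet_iff {T : Finset (α ⊕ α)} {i : α} :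
    T ⊆ exceptionalSet i ↔ i ∉ T.biUnion designSupport := by
  simp only [subset_iff, mem_exceptionalSet, mem_biUnion, not_exists, not_and]

theorem card_biUnion_exceptionalSet_lt (i : α) :
    #((exceptionalSet i).biUnion designSupport) < #(exceptionalSet i) := by
  rw [card_exceptionalSet]
  exact card_lt_univ_of_notMem (subset_exceptionalSet_iff.mp Subset.rfl)

theorem toLeft_subset_biUnion_designSupport (T : Finset (α ⊕ α)) :
    T.toLeft ⊆ T.biUnion designSupport := fun j hj =>
  mem_biUnion.mpr ⟨Sum.inl j, mem_toLeft.mp hj, mem_singleton_self j⟩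

theorem card_le_card_biUnion_designSupport_add_one {T : Finset (α ⊕ α)} {i : α}
    (hi : Sum.inr i ∈ T) : Fintype.card α ≤ #(T.biUnion designSupport) + 1 :=
  calc Fintype.card α = #(designSupport (Sum.inr i)) + 1 :=
        (card_erase_add_one (mem_univ i)).symm
    _ ≤ #(T.biUnion designSupport) + 1 :=
        Nat.succ_le_succ (card_le_card (subset_biUnion_of_mem designSupport hi))

theorem card_le_card_biUnion_designSupport {T : Finset (α ⊕ α)} (hT : #T ≤ Fintype.card α)
    (hne : ∀ i, T ≠ exceptionalSet i) : #T ≤ #(T.biUnion designSupport) := by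
  by_cases hcover : T.biUnion designSupport = univ
  · rwa [hcover, card_univ]
  obtain ⟨i, hi⟩ : ∃ i, i ∉ T.biUnion designSupport := by
    simpa only [eq_univ_iff_forall, not_forall] using hcover
  have hlt : #T < Fintype.card α := card_exceptionalSet i ▸
    card_lt_card ((subset_exceptionalSet_iff.mpr hi).ssubset_of_ne (hne i))
  obtain hright | ⟨j, hj⟩ := T.toRight.eq_empty_or_nonempty
  · have hcard : #T.toLeft = #T := by
      simpa only [hright, card_empty, add_zero] using T.card_toLeft_add_card_toRight
    exact hcard ▸ card_le_card (toLeft_subset_biUnion_designSupport T)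
  · have := card_le_card_biUnion_designSupport_add_one (mem_toRight.mp hj)
    omega

theorem stmt17_general (S : Finset (α ⊕ α)) :
    (∃ f : α ⊕ α → α, Set.InjOn f S ∧ ∀ s ∈ S, f s ∈ designSupport s) ↔
      #S ≤ Fintype.card α ∧ ¬ ∃ i, S = exceptionalSet i := by
  have : Nonempty (α ⊕ α → α) := ⟨Sum.elim id id⟩
  rw [exists_injOn_forall_mem_iff_forall_subset_card_le]
  constructor
  · intro hHall
    refine ⟨(hHall S Subset.rfl).trans (card_le_univ _), ?_⟩
    rintro ⟨i, rfl⟩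
    exact (card_biUnion_exceptionalSet_lt i).not_ge (hHall _ Subset.rfl)
  · rintro ⟨hcard, hne⟩ T hTS
    refine card_le_card_biUnion_designSupport ((card_le_card hTS).trans hcard) ?_
    rintro i rfl
    refine hne ⟨i, ?_⟩
    exact (eq_of_subset_of_card_le hTS (hcard.trans_eq (card_exceptionalSet i).symm)).symm

end Design

theorem stmt17 (n : ℕ) (hn : 1 ≤ n) (S : Finset (Fin n ⊕ Fin n)) (hS : S.card = n) :
    (∃ f : Fin n ⊕ Fin n → Fin n, Set.InjOn f (S : Set (Fin n ⊕ Fin n)) ∧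
        ∀ s ∈ S, f s ∈ symbolSupport s)
      ↔ ¬ ∃ i : Fin n,
          S = insert (Sum.inr i) ((Finset.univ.erase i).image Sum.inl) :=
  (stmt17_general S).trans (and_iff_right (by rw [hS, Fintype.card_fin]))
end
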